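/- Let D ⊂ ℝ² be the unit disc and let u ∈ W^{1,1}(D) satisfy ∫_D ∇u · ∇ψ = 0 for all ψ ∈ C¹ functions that vanish on a neighborhood of the closed disc's complement intersected with D (i.e. u is a distributional solution of the Dirichlet problem with f = 0 and zero boundary values). Then the antisymmetric reflection û(x) = u(x) for x ∈ D and û(x) = −u(x/|x|²) for x ∉ D is harmonic on all of ℝ², and consequently u ≡ 0. -/

import Mathlib

open MeasureTheory Metric Complex Classical

/-- The Laplacian of `ψ : ℂ → ℝ`, with `ℂ ≅ ℝ²` (basis `1, i`). -/
noncomputable def lap (ψ : ℂ → ℝ) (x : ℂ) : ℝ :=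
  fderiv ℝ (fun y => fderiv ℝ ψ y 1) x 1
    + fderiv ℝ (fun y => fderiv ℝ ψ y Complex.I) x Complex.I

/-- The antisymmetric reflection `û` of `u` across the unit circle,
`û(x) = u(x)` on `D`, `û(x) = -u(x*)` with `x* = x/|x|² = (conj x)⁻¹` outside. -/

noncomputable def antiReflect (u : ℂ → ℝ) (x : ℂ) : ℝ :=
  if x ∈ ball (0 : ℂ) 1 then u x else -u ((starRingEnd ℂ) x)⁻¹

/-!
The proof is by duality. Since `u` has zero trace, `∫_D U · ∇ψ = -∫_D u Δψ` for every `C²`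
function `ψ`, with no condition on `ψ` near the circle. Since `U` is merely integrable, `∫_D U · ∇ψ`
vanishes a priori only for `ψ` supported inside `D`; smoothly truncating `ψ` near the zeros of
`1 - |z|²` extends this to all `ψ = (1 - |z|²) q`. Hence `∫_D u Δ((1 - |z|²) q) = 0` for all
polynomials `q`. On the monomials `z^a z̄^b` the operator `q ↦ Δ((1 - |z|²) q)` is triangular with
nonzero diagonal entries `-4 (a + 1) (b + 1)`, so `u` is orthogonal to every polynomial and
therefore vanishes. The reflection `û` then vanishes almost everywhere as well, because inversion
in the circle preserves null sets.
-/

section Truncation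

/-- A smooth truncation of the identity: `t ↦ t` for `t ≥ 2 / n`, and `0` for `t ≤ 1 / n`. It turns
functions vanishing on the boundary of a domain into functions with compact support inside. -/
noncomputable def truncation (n : ℕ) (t : ℝ) : ℝ := t * Real.smoothTransition (n * t - 1)

lemma contDiff_truncation {k : ℕ∞} (n : ℕ) : ContDiff ℝ k (truncation n) :=
  contDiff_id.mul (Real.smoothTransition.contDiff.comp (by fun_prop))

lemma truncation_eq_zero {n : ℕ} {t : ℝ} (h : n * t ≤ 1) : truncation n t = 0 := by
  rw [truncation, Real.smoothTransition.zero_of_nonpos (sub_nonpos.2 h), mul_zero]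

lemma truncation_eq_self {n : ℕ} {t : ℝ} (h : 2 ≤ n * t) : truncation n t = t := by
  rw [truncation, Real.smoothTransition.one_of_one_le (by linarith), mul_one]

lemma norm_truncation_le (n : ℕ) (t : ℝ) : ‖truncation n t‖ ≤ ‖t‖ := by
  rw [truncation, norm_mul, Real.norm_of_nonneg (Real.smoothTransition.nonneg _)]
  exact mul_le_of_le_one_right (norm_nonneg t) (Real.smoothTransition.le_one _)

lemma deriv_truncation (n : ℕ) (t : ℝ) :
    deriv (truncation n) t = Real.smoothTransition (n * t - 1)
      + n * t * deriv Real.smoothTransition (n * t - 1) := by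
  have hdiff : DifferentiableAt ℝ Real.smoothTransition (n * t - 1) :=
    Real.smoothTransition.contDiffAt.differentiableAt one_ne_zero
  have hinner : HasDerivAt (fun s : ℝ => n * s - 1) n t := by
    simpa using ((hasDerivAt_id t).const_mul (n : ℝ)).sub_const 1
  have h := ((hasDerivAt_id t).mul (hdiff.hasDerivAt.comp t hinner)).deriv
  simp only [Function.comp_apply, id_eq, one_mul] at h
  exact h.trans (by ring)

lemma hasCompactSupport_deriv_smoothTransition :
    HasCompactSupport (deriv Real.smoothTransition) := by
  refine HasCompactSupport.intro' (isCompact_Icc (a := (0 : ℝ)) (b := 1)) isClosed_Icc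
    fun x hx => ?_
  rw [Set.mem_Icc, not_and_or, not_le, not_le] at hx
  rcases hx with hx | hx
  · have : Real.smoothTransition =ᶠ[nhds x] fun _ => 0 := by
      filter_upwards [Iio_mem_nhds hx] with y hy
      exact Real.smoothTransition.zero_of_nonpos hy.le
    rw [this.deriv_eq, deriv_const]
  · have : Real.smoothTransition =ᶠ[nhds x] fun _ => 1 := by
      filter_upwards [Ioi_mem_nhds hx] with y hy
      exact Real.smoothTransition.one_of_one_le hy.le
    rw [this.deriv_eq, deriv_const]

/-- By scaling, `deriv (truncation n) t` depends only on `n * t`; hence the bound is uniform. -/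
lemma exists_norm_deriv_truncation_le : ∃ C, ∀ n t, ‖deriv (truncation n) t‖ ≤ C := by
  have hcont : Continuous fun s : ℝ => (s + 1) * deriv Real.smoothTransition s :=
    (by fun_prop : Continuous fun s : ℝ => s + 1).mul
      ((Real.smoothTransition.contDiff (n := 1)).continuous_deriv le_rfl)
  obtain ⟨C, hC⟩ := hasCompactSupport_deriv_smoothTransition.mul_left.exists_bound_of_continuous
    hcont
  refine ⟨1 + C, fun n t => ?_⟩
  rw [deriv_truncation]
  refine (norm_add_le _ _).trans (add_le_add ?_ ?_)
  · rw [Real.norm_of_nonneg (Real.smoothTransition.nonneg _)]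
    exact Real.smoothTransition.le_one _
  · simpa using hC (n * t - 1)

end Truncation

section WeaklyDivFree

variable {E : Type*} [NormedAddCommGroup E] [NormedSpace ℝ E]

lemma tsupport_truncation_mul_subset {X : Type*} [TopologicalSpace X] {ρ : X → ℝ}
    (hρ : Continuous ρ) (q : X → ℝ) (n : ℕ) :
    tsupport (fun x => truncation n (ρ x) * q x) ⊆ {x | 1 ≤ n * ρ x} := by
  refine closure_minimal (fun x hx => ?_) (isClosed_le continuous_const (by fun_prop))
  by_contra hlt
  exact hx (by simp only [truncation_eq_zero (not_le.1 hlt).le, zero_mul])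

lemma fderiv_truncation_mul {ρ q : E → ℝ} {x : E} (hρ : DifferentiableAt ℝ ρ x)
    (hq : DifferentiableAt ℝ q x) (n : ℕ) :
    fderiv ℝ (fun y => truncation n (ρ y) * q y) x = truncation n (ρ x) • fderiv ℝ q x
      + q x • deriv (truncation n) (ρ x) • fderiv ℝ ρ x :=
  have htrunc : HasDerivAt (truncation n) (deriv (truncation n) (ρ x)) (ρ x) :=
    ((contDiff_truncation (k := 1) n).differentiable one_ne_zero _).hasDerivAt
  ((htrunc.comp_hasFDerivAt x hρ.hasFDerivAt).mul hq.hasFDerivAt).fderiv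

lemma exists_norm_fderiv_truncation_mul_le {K : Set E} (hK : IsCompact K) {ρ q : E → ℝ}
    (hρ : ContDiff ℝ 1 ρ) (hq : ContDiff ℝ 1 q) :
    ∃ M, ∀ n, ∀ x ∈ K, ‖fderiv ℝ (fun y => truncation n (ρ y) * q y) x‖ ≤ M := by
  obtain ⟨C, hC⟩ := exists_norm_deriv_truncation_le
  have := hρ.continuous_fderiv one_ne_zero
  have := hq.continuous_fderiv one_ne_zero
  have := hρ.continuous
  have := hq.continuous
  obtain ⟨M, hM⟩ := hK.exists_bound_of_continuousOn
    (f := fun x => ‖ρ x‖ * ‖fderiv ℝ q x‖ + ‖q x‖ * (C * ‖fderiv ℝ ρ x‖)) (by fun_prop)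
  refine ⟨M, fun n x hx => le_trans ?_ ((le_abs_self _).trans (hM x hx))⟩
  rw [fderiv_truncation_mul (hρ.differentiable one_ne_zero x) (hq.differentiable one_ne_zero x)]
  refine (norm_add_le _ _).trans ?_
  simp only [norm_smul]
  gcongr
  · exact norm_truncation_le n _
  · exact hC n _

lemma eventually_fderiv_truncation_mul_eq {ρ q : E → ℝ} (hρ : Continuous ρ) {x : E}
    (hx : 0 < ρ x) : ∀ᶠ n : ℕ in Filter.atTop,
      fderiv ℝ (fun y => truncation n (ρ y) * q y) x = fderiv ℝ (fun y => ρ y * q y) x := by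
  obtain ⟨N, hN⟩ := exists_nat_gt (2 / ρ x)
  filter_upwards [Filter.eventually_ge_atTop N] with n hn
  have hlt : 2 < n * ρ x := (div_lt_iff₀ hx).1 (hN.trans_le (by exact_mod_cast hn))
  refine Filter.EventuallyEq.fderiv_eq ?_
  filter_upwards [(isOpen_lt continuous_const (by fun_prop : Continuous fun y => n * ρ y)).mem_nhds
    hlt] with y hy
  rw [truncation_eq_self (le_of_lt hy)]

variable [MeasurableSpace E] {μ : Measure E} {V : E → E} {Ω : Set E}

/-- The field `V` has vanishing divergence on `Ω` in the sense of distributions; compactly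
supported test functions of class `C¹` are allowed. -/
def IsWeaklyDivFreeOn (V : E → E) (Ω : Set E) (μ : Measure E) : Prop :=
  ∀ ψ : E → ℝ, ContDiff ℝ 1 ψ → HasCompactSupport ψ → tsupport ψ ⊆ Ω →
    ∫ x in Ω, fderiv ℝ ψ x (V x) ∂μ = 0

variable [FiniteDimensional ℝ E] [BorelSpace E]

lemma aestronglyMeasurable_fderiv_apply {ν : Measure E} {ψ : E → ℝ} (hψ : ContDiff ℝ 1 ψ)
    (hV : AEStronglyMeasurable V ν) : AEStronglyMeasurable (fun x => fderiv ℝ ψ x (V x)) ν :=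
  (ContinuousLinearMap.id ℝ (E →L[ℝ] ℝ)).aestronglyMeasurable_comp₂
    (hψ.continuous_fderiv one_ne_zero).aestronglyMeasurable hV

/-- The functions `truncation n (ρ x) * q x` are admissible, and their derivatives converge
boundedly to that of `ρ q` on `Ω`. -/
theorem IsWeaklyDivFreeOn.setIntegral_fderiv_mul_eq_zero (h : IsWeaklyDivFreeOn V Ω μ)
    (hV : IntegrableOn V Ω μ) (hΩ : Bornology.IsBounded Ω) {ρ q : E → ℝ} (hρ : ContDiff ℝ 1 ρ)
    (hρΩ : ∀ x, x ∈ Ω ↔ 0 < ρ x) (hq : ContDiff ℝ 1 q) :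
    ∫ x in Ω, fderiv ℝ (fun y => ρ y * q y) x (V x) ∂μ = 0 := by
  have : ProperSpace E := FiniteDimensional.proper ℝ E
  have hΩm : MeasurableSet Ω := by
    rw [Set.ext hρΩ]; exact measurableSet_lt measurable_const hρ.continuous.measurable
  have hψ n : ContDiff ℝ 1 fun y => truncation n (ρ y) * q y :=
    ((contDiff_truncation n).comp hρ).mul hq
  have hsupp n : tsupport (fun y => truncation n (ρ y) * q y) ⊆ Ω := fun x hx => (hρΩ x).2 <|
    pos_of_mul_pos_right (one_pos.trans_le (tsupport_truncation_mul_subset hρ.continuous q n hx))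
      n.cast_nonneg
  have hzero n : ∫ x in Ω, fderiv ℝ (fun y => truncation n (ρ y) * q y) x (V x) ∂μ = 0 :=
    h _ (hψ n) (hΩ.isCompact_closure.of_isClosed_subset (isClosed_tsupport _)
      ((hsupp n).trans subset_closure)) (hsupp n)
  obtain ⟨M, hM⟩ := exists_norm_fderiv_truncation_mul_le hΩ.isCompact_closure hρ hq
  have hlim : Filter.Tendsto
      (fun n => ∫ x in Ω, fderiv ℝ (fun y => truncation n (ρ y) * q y) x (V x) ∂μ) Filter.atTop
      (nhds (∫ x in Ω, fderiv ℝ (fun y => ρ y * q y) x (V x) ∂μ)) := by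
    refine tendsto_integral_of_dominated_convergence (fun x => M * ‖V x‖)
      (fun n => aestronglyMeasurable_fderiv_apply (hψ n) hV.aestronglyMeasurable)
      (hV.norm.const_mul M) (fun n => ?_) ?_
    · filter_upwards [ae_restrict_mem hΩm] with x hx
      exact ContinuousLinearMap.le_of_opNorm_le _ (hM n x (subset_closure hx)) _
    · filter_upwards [ae_restrict_mem hΩm] with x hx
      refine tendsto_const_nhds.congr' ?_
      filter_upwards [eventually_fderiv_truncation_mul_eq (q := q) hρ.continuous ((hρΩ x).1 hx)]
        with n hn
      rw [hn]
  simp only [hzero] at hlim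
  exact tendsto_nhds_unique hlim tendsto_const_nhds

end WeaklyDivFree

section WeakDerivative

variable {E : Type*} [NormedAddCommGroup E] [NormedSpace ℝ E]

lemma exists_contDiff_hasCompactSupport_eventuallyEq [FiniteDimensional ℝ E] {K : Set E}
    (hK : IsCompact K) {F : Type*} [NormedAddCommGroup F] [NormedSpace ℝ F] {n : ℕ∞} {φ : E → F}
    (hφ : ContDiff ℝ n φ) :
    ∃ φ' : E → F, ContDiff ℝ n φ' ∧ HasCompactSupport φ' ∧ ∀ x ∈ K, φ' =ᶠ[nhds x] φ := by
  obtain ⟨R, hR, hKR⟩ := hK.isBounded.subset_ball_lt 0 0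
  let χ : ContDiffBump (0 : E) := ⟨R, R + 1, hR, lt_add_one R⟩
  refine ⟨fun x => χ x • φ x, χ.contDiff.smul hφ, χ.hasCompactSupport.smul_right, fun x hx => ?_⟩
  filter_upwards [isOpen_ball.mem_nhds (hKR hx)] with y hy
  rw [χ.one_of_mem_closedBall (ball_subset_closedBall hy), one_smul]

variable [MeasurableSpace E] {μ : Measure E} {f g : E → ℝ} {Ω : Set E} {v : E}

/-- The function `g` is the weak derivative of `f` in the direction `v` on the whole space. For the
zero extension of a function on `Ω`, asking that the weak gradient is again a zero extension encodes
membership in `W₀^{1,1}(Ω)`. -/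
def HasWeakDerivAlong (f g : E → ℝ) (v : E) (μ : Measure E) : Prop :=
  ∀ φ : E → ℝ, ContDiff ℝ 1 φ → HasCompactSupport φ →
    ∫ x, f x * fderiv ℝ φ x v ∂μ = -∫ x, g x * φ x ∂μ

lemma integral_indicator_mul {α : Type*} [MeasurableSpace α] {ν : Measure α} {s : Set α}
    (hs : MeasurableSet s) (f g : α → ℝ) :
    ∫ x, s.indicator f x * g x ∂ν = ∫ x in s, f x * g x ∂ν := by
  simp only [← Set.indicator_mul_left, integral_indicator hs]

lemma HasWeakDerivAlong.setIntegral_mul_fderiv [FiniteDimensional ℝ E]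
    (h : HasWeakDerivAlong (Ω.indicator f) (Ω.indicator g) v μ) (hΩ : Bornology.IsBounded Ω)
    (hΩm : MeasurableSet Ω) {φ : E → ℝ} (hφ : ContDiff ℝ 1 φ) :
    ∫ x in Ω, f x * fderiv ℝ φ x v ∂μ = -∫ x in Ω, g x * φ x ∂μ := by
  have : ProperSpace E := FiniteDimensional.proper ℝ E
  obtain ⟨φ', hφ', hsupp, heq⟩ :=
    exists_contDiff_hasCompactSupport_eventuallyEq hΩ.isCompact_closure (n := 1) hφ
  calc ∫ x in Ω, f x * fderiv ℝ φ x v ∂μ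
      = ∫ x in Ω, f x * fderiv ℝ φ' x v ∂μ := setIntegral_congr_fun hΩm fun x hx => by
        simp only [(heq x (subset_closure hx)).fderiv_eq]
    _ = -∫ x in Ω, g x * φ' x ∂μ := by
        simpa only [integral_indicator_mul hΩm] using h φ' hφ' hsupp
    _ = -∫ x in Ω, g x * φ x ∂μ := congrArg Neg.neg <| setIntegral_congr_fun hΩm fun x hx => by
        simp only [(heq x (subset_closure hx)).eq_of_nhds]

end WeakDerivative

section Green

open scoped InnerProductSpace Laplacian

variable {E : Type*} [NormedAddCommGroup E] [InnerProductSpace ℝ E] [FiniteDimensional ℝ E]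
  {ι : Type*} [Fintype ι]

lemma laplacian_eq_sum_fderiv_fderiv {F : Type*} [NormedAddCommGroup F] [NormedSpace ℝ F]
    (b : OrthonormalBasis ι ℝ E) {ψ : E → F} (hψ : ContDiff ℝ 2 ψ) (x : E) :
    (Δ ψ) x = ∑ i, fderiv ℝ (fun y => fderiv ℝ ψ y (b i)) x (b i) := by
  have hdiff : DifferentiableAt ℝ (fderiv ℝ ψ) x :=
    (hψ.fderiv_right (m := 1) le_rfl).differentiable one_ne_zero x
  simp [InnerProductSpace.laplacian_eq_iteratedFDeriv_orthonormalBasis ψ b,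
    iteratedFDeriv_two_apply, fderiv_clm_apply hdiff (differentiableAt_const _)]

lemma continuous_laplacian {F : Type*} [NormedAddCommGroup F] [NormedSpace ℝ F] {ψ : E → F}
    (hψ : ContDiff ℝ 2 ψ) : Continuous (Δ ψ) := by
  rw [InnerProductSpace.laplacian_eq_iteratedFDeriv_stdOrthonormalBasis]
  have := hψ.continuous_iteratedFDeriv (m := 2) le_rfl
  fun_prop

variable [MeasurableSpace E] [BorelSpace E] {μ : Measure E} {u : E → ℝ} {U : E → E} {Ω : Set E}

lemma integrableOn_smul_of_continuous {F : Type*} [NormedAddCommGroup F]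
    [NormedSpace ℝ F] (hu : IntegrableOn u Ω μ) (hΩ : Bornology.IsBounded Ω)
    (hΩm : MeasurableSet Ω) {g : E → F} (hg : Continuous g) :
    IntegrableOn (fun x => u x • g x) Ω μ :=
  hu.smul_continuousOn_of_subset hg.continuousOn hΩm hΩ.isCompact_closure subset_closure

theorem setIntegral_mul_laplacian_eq_neg (b : OrthonormalBasis ι ℝ E) (hΩ : Bornology.IsBounded Ω)
    (hΩm : MeasurableSet Ω) (hu : IntegrableOn u Ω μ) (hU : IntegrableOn U Ω μ)
    (h : ∀ i, HasWeakDerivAlong (Ω.indicator u) (Ω.indicator fun x => ⟪b i, U x⟫_ℝ) (b i) μ)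
    {ψ : E → ℝ} (hψ : ContDiff ℝ 2 ψ) :
    ∫ x in Ω, u x * (Δ ψ) x ∂μ = -∫ x in Ω, fderiv ℝ ψ x (U x) ∂μ := by
  have hψ' i : ContDiff ℝ 1 fun y => fderiv ℝ ψ y (b i) :=
    (hψ.fderiv_right (m := 1) le_rfl).clm_apply contDiff_const
  have hψ'' i : Continuous fun x => fderiv ℝ (fun y => fderiv ℝ ψ y (b i)) x (b i) :=
    ((hψ' i).continuous_fderiv one_ne_zero).clm_apply continuous_const
  have hUi i : IntegrableOn (fun x => ⟪b i, U x⟫_ℝ) Ω μ := hU.const_inner (b i)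
  have hexpand x : fderiv ℝ ψ x (U x) = ∑ i, ⟪b i, U x⟫_ℝ * fderiv ℝ ψ x (b i) := by
    conv_lhs => rw [← b.sum_repr' (U x)]
    simp
  calc ∫ x in Ω, u x * (Δ ψ) x ∂μ
      = ∑ i, ∫ x in Ω, u x * fderiv ℝ (fun y => fderiv ℝ ψ y (b i)) x (b i) ∂μ := by
        simp only [laplacian_eq_sum_fderiv_fderiv b hψ, Finset.mul_sum]
        exact integral_finsetSum _ fun i _ => integrableOn_smul_of_continuous hu hΩ hΩm (hψ'' i)
    _ = ∑ i, -∫ x in Ω, ⟪b i, U x⟫_ℝ * fderiv ℝ ψ x (b i) ∂μ :=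
        Finset.sum_congr rfl fun i _ => (h i).setIntegral_mul_fderiv hΩ hΩm (hψ' i)
    _ = -∫ x in Ω, fderiv ℝ ψ x (U x) ∂μ := by
        simp only [hexpand, Finset.sum_neg_distrib]
        exact congrArg Neg.neg <| Eq.symm <| integral_finsetSum _ fun i _ =>
          integrableOn_smul_of_continuous (hUi i) hΩ hΩm (hψ' i).continuous

theorem setIntegral_smul_laplacian_smul_eq_zero (b : OrthonormalBasis ι ℝ E)
    (hΩ : Bornology.IsBounded Ω) (hu : IntegrableOn u Ω μ) (hU : IntegrableOn U Ω μ)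
    (htrace : ∀ i, HasWeakDerivAlong (Ω.indicator u) (Ω.indicator fun x => ⟪b i, U x⟫_ℝ) (b i) μ)
    (hdiv : IsWeaklyDivFreeOn U Ω μ) {ρ : E → ℝ} (hρ : ContDiff ℝ 2 ρ)
    (hρΩ : ∀ x, x ∈ Ω ↔ 0 < ρ x) {F : Type*} [NormedAddCommGroup F] [NormedSpace ℝ F]
    [CompleteSpace F] {q : E → F} (hq : ContDiff ℝ 2 q) :
    ∫ x in Ω, u x • (Δ (ρ • q)) x ∂μ = 0 := by
  have hΩm : MeasurableSet Ω := by
    rw [Set.ext hρΩ]; exact measurableSet_lt measurable_const hρ.continuous.measurable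
  have hinteg : IntegrableOn (fun x => u x • (Δ (ρ • q)) x) Ω μ :=
    integrableOn_smul_of_continuous hu hΩ hΩm (continuous_laplacian (hρ.smul hq))
  refine SeparatingDual.eq_zero_of_forall_dual_eq_zero (R := ℝ) fun ℓ => ?_
  have hℓq : ContDiff ℝ 2 (ℓ ∘ q) := ℓ.contDiff.comp hq
  have hlap x : ℓ ((Δ (ρ • q)) x) = (Δ fun y => ρ y * (ℓ ∘ q) y) x := by
    rw [← Function.comp_apply (f := ℓ), ← (hρ.smul hq).contDiffAt.laplacian_CLM_comp_left]
    simp [Function.comp_def]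
  rw [← ℓ.integral_comp_comm hinteg]
  simp only [map_smul, smul_eq_mul, hlap]
  rw [setIntegral_mul_laplacian_eq_neg b hΩ hΩm hu hU htrace (hρ.mul hℓq), neg_eq_zero]
  exact hdiv.setIntegral_fderiv_mul_eq_zero hU hΩ (hρ.of_le one_le_two) hρΩ (hℓq.of_le one_le_two)

end Green

section Monomials

open scoped ComplexConjugate Laplacian

/-- The monomial `z^a z̄^b`. These are eigenvectors of rotations, which makes the action of the
Laplacian on polynomials in two real variables explicit. -/
noncomputable def conjMonomial (a b : ℕ) (z : ℂ) : ℂ := z ^ a * conj z ^ b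

lemma contDiff_conjMonomial {n : WithTop ℕ∞} (a b : ℕ) : ContDiff ℝ n (conjMonomial a b) :=
  (contDiff_id.pow a).mul (conjCLE.contDiff.pow b)

lemma fderiv_conjMonomial (a b : ℕ) (z v : ℂ) :
    fderiv ℝ (conjMonomial a b) z v
      = a * v * conjMonomial (a - 1) b z + b * conj v * conjMonomial a (b - 1) z := by
  have h : HasFDerivAt (conjMonomial a b) _ z := ((hasFDerivAt_id (𝕜 := ℝ) z).pow a).mul
    ((conjCLE : ℂ →L[ℝ] ℂ).hasFDerivAt (x := z) |>.pow b)
  rw [h.fderiv]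
  simp only [id_eq, ContinuousLinearEquiv.coe_coe, ContinuousAlgEquiv.coeCLE_apply, conjCAE_apply,
    nsmul_eq_mul, add_apply, smul_apply, smul_eq_mul, ContinuousLinearMap.id_apply, conjMonomial]
  ring

lemma laplacian_conjMonomial (a b : ℕ) (z : ℂ) :
    (Δ (conjMonomial a b)) z = 4 * a * b * conjMonomial (a - 1) (b - 1) z := by
  have hdiff a b : DifferentiableAt ℝ (conjMonomial a b) z :=
    (contDiff_conjMonomial (n := 1) a b).differentiable one_ne_zero z
  have hsecond v : fderiv ℝ (fun y => fderiv ℝ (conjMonomial a b) y v) z v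
      = a * v * fderiv ℝ (conjMonomial (a - 1) b) z v
        + b * conj v * fderiv ℝ (conjMonomial a (b - 1)) z v := by
    simp only [fderiv_conjMonomial a b]
    rw [fderiv_fun_add ((hdiff _ _).const_mul _) ((hdiff _ _).const_mul _),
      fderiv_const_mul (hdiff _ _), fderiv_const_mul (hdiff _ _)]
    rfl
  rw [laplacian_eq_sum_fderiv_fderiv orthonormalBasisOneI (contDiff_conjMonomial a b),
    Fin.sum_univ_two, hsecond, hsecond]
  simp only [fderiv_conjMonomial, coe_orthonormalBasisOneI, Matrix.cons_val_zero,
    Matrix.cons_val_one, map_one, conj_I]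
  linear_combination (a * (a - 1 : ℕ) * conjMonomial (a - 1 - 1) b z
    - 2 * a * b * conjMonomial (a - 1) (b - 1) z
    + b * (b - 1 : ℕ) * conjMonomial a (b - 1 - 1) z) * I_sq

lemma one_sub_norm_sq_smul_conjMonomial (a b : ℕ) :
    (fun z : ℂ => 1 - ‖z‖ ^ 2) • conjMonomial a b
      = conjMonomial a b - conjMonomial (a + 1) (b + 1) := by
  ext z
  simp only [Pi.smul_apply', Pi.sub_apply, conjMonomial, real_smul]
  push_cast
  rw [← mul_conj' z]
  ring

lemma laplacian_one_sub_norm_sq_smul_conjMonomial (a b : ℕ) (z : ℂ) :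
    (Δ ((fun z : ℂ => 1 - ‖z‖ ^ 2) • conjMonomial a b)) z
      = 4 * a * b * conjMonomial (a - 1) (b - 1) z
        - 4 * (a + 1) * (b + 1) * conjMonomial a b z := by
  rw [one_sub_norm_sq_smul_conjMonomial, (contDiff_conjMonomial a b).contDiffAt.laplacian_sub
    (contDiff_conjMonomial _ _).contDiffAt, laplacian_conjMonomial, laplacian_conjMonomial]
  simp

/-- The relation between the moments for `(a, b)` and `(a - 1, b - 1)` has no second term when
`b = 0`, so the moments vanish by induction on `b`. -/
theorem integral_smul_conjMonomial_eq_zero {μ : Measure ℂ} {u : ℂ → ℝ}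
    (hinteg : ∀ a b, Integrable (fun z => u z • conjMonomial a b z) μ)
    (h : ∀ a b, ∫ z, u z • (Δ ((fun z : ℂ => 1 - ‖z‖ ^ 2) • conjMonomial a b)) z ∂μ = 0)
    (a b : ℕ) : ∫ z, u z • conjMonomial a b z ∂μ = 0 := by
  have hrec a b : 4 * (a + 1) * (b + 1) * ∫ z, u z • conjMonomial a b z ∂μ
      = 4 * a * b * ∫ z, u z • conjMonomial (a - 1) (b - 1) z ∂μ := by
    have hab := h a b
    simp only [laplacian_one_sub_norm_sq_smul_conjMonomial, smul_sub, ← mul_smul_comm] at hab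
    rw [integral_sub ((hinteg _ _).const_mul _) ((hinteg _ _).const_mul _), integral_const_mul,
      integral_const_mul] at hab
    exact (sub_eq_zero.1 hab).symm
  have hpos (a b : ℕ) : (4 * (a + 1) * (b + 1) : ℂ) ≠ 0 := by norm_cast
  induction b generalizing a with
  | zero => simpa [hpos, Nat.cast_add_one_ne_zero] using hrec a 0
  | succ b ih =>
    refine (mul_eq_zero.1 ((hrec a (b + 1)).trans ?_)).resolve_left (hpos _ _)
    rw [Nat.add_sub_cancel, ih, mul_zero]

end Monomials

section Density

open scoped ComplexConjugate

lemma integral_smul_eq_zero_of_dense_span {X 𝕜 F : Type*} [TopologicalSpace X] [CompactSpace X]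
    [MeasurableSpace X] [OpensMeasurableSpace X] [RCLike 𝕜] [NormedAddCommGroup F]
    [NormedSpace ℝ F] [NormedSpace 𝕜 F] {ν : Measure X} {f : X → F} (hf : Integrable f ν)
    {S : Set C(X, 𝕜)} (hS : Dense (Submodule.span 𝕜 S : Set C(X, 𝕜)))
    (h : ∀ p ∈ S, ∫ x, p x • f x ∂ν = 0) (p : C(X, 𝕜)) : ∫ x, p x • f x ∂ν = 0 := by
  have hinteg (p : C(X, 𝕜)) : Integrable (fun x => p x • f x) ν :=
    hf.bdd_smul ‖p‖ p.continuous.aestronglyMeasurable (.of_forall p.norm_coe_le_norm)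
  let L : C(X, 𝕜) →L[𝕜] F := LinearMap.mkContinuous
    { toFun := fun p => ∫ x, p x • f x ∂ν
      map_add' := fun p q => by
        simp only [ContinuousMap.add_apply, add_smul, integral_add (hinteg p) (hinteg q)]
      map_smul' := fun c p => by
        simp only [ContinuousMap.smul_apply, smul_assoc, integral_smul, RingHom.id_apply] }
    (∫ x, ‖f x‖ ∂ν) fun p => by
      rw [mul_comm, ← integral_const_mul]
      refine norm_integral_le_of_norm_le (hf.norm.const_mul _) (.of_forall fun x => ?_)
      rw [norm_smul]
      gcongr
      exact p.norm_coe_le_norm x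
  exact congrArg (· p) (ContinuousLinearMap.ext_on (f := L) (g := 0) hS h)

lemma dense_span_restrict_conjMonomial (s : Set ℂ) [CompactSpace s] :
    Dense (Submodule.span ℂ (Set.range fun ab : ℕ × ℕ =>
      (⟨conjMonomial ab.1 ab.2, (contDiff_conjMonomial (n := 0) _ _).continuous⟩ :
        C(ℂ, ℂ)).restrict s) : Set C(s, ℂ)) := by
  have hdense : Dense ((polynomialFunctions s).starClosure : Set C(s, ℂ)) := by
    rw [dense_iff_closure_eq, ← StarSubalgebra.topologicalClosure_coe,
      polynomialFunctions.starClosure_topologicalClosure, StarSubalgebra.coe_top]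
  refine hdense.mono fun p hp => ?_
  rw [SetLike.mem_coe, polynomialFunctions.starClosure_eq_adjoin_X,
    ← StarSubalgebra.mem_toSubalgebra, StarAlgebra.adjoin_toSubalgebra,
    ← Subalgebra.mem_toSubmodule, Algebra.adjoin_eq_span, Set.star_singleton,
    Set.singleton_union] at hp
  refine Submodule.span_mono (fun q hq => ?_) hp
  obtain ⟨a, b, rfl⟩ := (Submonoid.mem_closure_pair _ _ _).1 hq
  exact ⟨(a, b), by ext z; simp [conjMonomial]⟩

theorem ae_eq_zero_of_forall_integral_conjMonomial_smul_eq_zero {F : Type*} [NormedAddCommGroup F]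
    [NormedSpace ℂ F] [CompleteSpace F] {μ : Measure ℂ} {K : Set ℂ} (hK : IsCompact K)
    (hμK : ∀ᵐ z ∂μ, z ∈ K) {f : ℂ → F} (hf : Integrable f μ)
    (h : ∀ a b, ∫ z, conjMonomial a b z • f z ∂μ = 0) : ∀ᵐ z ∂μ, f z = 0 := by
  have : CompactSpace K := isCompact_iff_compactSpace.1 hK
  have hsubtype {G : Type _} [NormedAddCommGroup G] [NormedSpace ℝ G] (g : ℂ → G) :
      ∫ z : K, g z ∂(μ.comap Subtype.val) = ∫ z, g z ∂μ := by
    rw [integral_subtype_comap hK.measurableSet, Measure.restrict_eq_self_of_ae_mem hμK]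
  have hfK : Integrable (fun z : K => f z) (μ.comap Subtype.val) :=
    (integrableOn_iff_comap_subtypeVal hK.measurableSet).1 hf.integrableOn
  refine ae_eq_zero_of_integral_contDiff_smul_eq_zero hf.locallyIntegrable fun g hg _ => ?_
  have hgc : Continuous fun z => (g z : ℂ) := continuous_ofReal.comp hg.continuous
  have hzero := integral_smul_eq_zero_of_dense_span hfK (dense_span_restrict_conjMonomial K)
    (by rintro _ ⟨ab, rfl⟩; exact (hsubtype _).trans (h ab.1 ab.2))
    ((⟨_, hgc⟩ : C(ℂ, ℂ)).restrict K)
  simpa using (hsubtype fun z => (g z : ℂ) • f z).symm.trans hzero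

end Density

section UnitDisc

lemma realLinear_apply_eq_re_smul_add_im_smul {F : Type*} [AddCommGroup F] [Module ℝ F]
    [TopologicalSpace F] (L : ℂ →L[ℝ] F) (z : ℂ) : L z = z.re • L 1 + z.im • L I := by
  conv_lhs => rw [← re_add_im z]
  rw [← mul_one (z.re : ℂ), ← real_smul, ← real_smul, map_add, map_smul, map_smul]

lemma mem_ball_zero_one_iff_one_sub_norm_sq_pos {E : Type*} [SeminormedAddCommGroup E] (x : E) :
    x ∈ ball 0 1 ↔ 0 < 1 - ‖x‖ ^ 2 := by
  rw [mem_ball_zero_iff, sub_pos, sq_lt_one_iff₀ (norm_nonneg x)]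

theorem ae_eq_zero_of_hasWeakDerivAlong_of_isWeaklyDivFreeOn {u : ℂ → ℝ} {U : ℂ → ℂ}
    {μ : Measure ℂ} {ι : Type*} [Fintype ι] (e : OrthonormalBasis ι ℝ ℂ)
    (hu : IntegrableOn u (ball 0 1) μ) (hU : IntegrableOn U (ball 0 1) μ)
    (htrace : ∀ i, HasWeakDerivAlong ((ball 0 1).indicator u)
      ((ball 0 1).indicator fun x => inner ℝ (e i) (U x)) (e i) μ)
    (hdiv : IsWeaklyDivFreeOn U (ball 0 1) μ) : ∀ᵐ x ∂μ.restrict (ball 0 1), u x = 0 := by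
  have hmoments := integral_smul_conjMonomial_eq_zero
    (fun a b => integrableOn_smul_of_continuous hu isBounded_ball measurableSet_ball
      (contDiff_conjMonomial (n := 0) a b).continuous)
    fun a b => setIntegral_smul_laplacian_smul_eq_zero e isBounded_ball hu hU htrace hdiv
      (contDiff_const.sub (contDiff_norm_sq ℝ)) mem_ball_zero_one_iff_one_sub_norm_sq_pos
      (contDiff_conjMonomial a b)
  simpa using ae_eq_zero_of_forall_integral_conjMonomial_smul_eq_zero
    (f := fun x => (u x : ℂ)) (isCompact_closedBall (0 : ℂ) 1)
    ((ae_restrict_mem measurableSet_ball).mono fun _ h => ball_subset_closedBall h) hu.ofReal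
    (by simpa only [smul_eq_mul, real_smul, mul_comm] using hmoments)

end UnitDisc

section Reflection

open scoped ComplexConjugate

lemma quasiMeasurePreserving_inv_conj :
    Measure.QuasiMeasurePreserving (fun z : ℂ => (conj z)⁻¹) := by
  set J : ℂ → ℂ := fun z => (conj z)⁻¹
  have hmeas : Measurable J := continuous_conj.measurable.inv
  have hinv : Function.Involutive J := fun z => by simp [J]
  have hdiff z (hz : z ≠ 0) : DifferentiableAt ℝ J z :=
    (conjCLE.differentiableAt (x := z)).inv (by simpa using hz)
  refine ⟨hmeas, Measure.AbsolutelyContinuous.mk fun N hNm hN => ?_⟩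
  rw [Measure.map_apply hmeas hNm, ← Set.image_eq_preimage_of_inverse hinv hinv]
  have hsub : J '' N ⊆ insert (J 0) (J '' (N \ {0})) := by
    rw [← Set.image_insert_eq, Set.insert_sdiff_singleton]
    exact Set.image_mono (Set.subset_insert 0 N)
  refine measure_mono_null hsub ?_
  rw [measure_congr (insert_ae_eq_self _ _)]
  exact addHaar_image_eq_zero_of_differentiableOn_of_addHaar_eq_zero volume
    (fun z hz => (hdiff z hz.2).differentiableWithinAt) (measure_mono_null Set.sdiff_subset hN)

lemma antiReflect_ae_eq {u v : ℂ → ℝ} (h : ∀ᵐ x ∂volume.restrict (ball (0 : ℂ) 1), u x = v x) :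
    ∀ᵐ x, antiReflect u x = antiReflect v x := by
  rw [ae_restrict_iff' measurableSet_ball] at h
  have hsphere : ∀ᵐ x : ℂ, x ∉ sphere 0 1 :=
    measure_eq_zero_iff_ae_notMem.1 (Measure.addHaar_sphere volume 0 1)
  filter_upwards [h, quasiMeasurePreserving_inv_conj.ae h, hsphere] with x hx hx' hxs
  by_cases hxD : x ∈ ball (0 : ℂ) 1
  · simp only [antiReflect, if_pos hxD, hx hxD]
  · have hnorm : 1 < ‖x‖ := by
      rw [mem_ball_zero_iff, not_lt] at hxD
      exact hxD.lt_of_ne' (by simpa using hxs)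
    simp only [antiReflect, if_neg hxD]
    rw [hx' (by simpa using inv_lt_one_of_one_lt₀ hnorm)]

end Reflection

/-- Let `u ∈ W^{1,1}₀(D)` (with weak gradient `U`, zero boundary trace encoded by
the fact that the extension of `u` by zero has the extension of `U` by zero as weak gradient
on all of `ℝ²`) be a distributional solution of the Dirichlet problem with `f = 0`, i.e.
`∫_D ∇u·∇ψ = 0` for all `C¹` functions `ψ` compactly supported in `D`. Then the antisymmetric
reflection `û` is (weakly) harmonic on all of `ℝ²`, and consequently `u ≡ 0`. -/
theorem stmt_9 (u : ℂ → ℝ) (U : ℂ → ℂ)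
    (hu : IntegrableOn u (ball 0 1)) (hU : IntegrableOn U (ball 0 1))
    -- zero boundary values: the zero extensions satisfy the weak gradient identity on ℝ²
    (htrace : ∀ φ : ℂ → ℝ, ContDiff ℝ 1 φ → HasCompactSupport φ →
      (∫ x, Set.indicator (ball (0:ℂ) 1) u x * fderiv ℝ φ x 1)
        = - ∫ x, Set.indicator (ball (0:ℂ) 1) (fun y => (U y).re) x * φ x
      ∧ (∫ x, Set.indicator (ball (0:ℂ) 1) u x * fderiv ℝ φ x Complex.I)
        = - ∫ x, Set.indicator (ball (0:ℂ) 1) (fun y => (U y).im) x * φ x)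
    -- distributional solution of -Δu = 0 in D
    (hharm : ∀ ψ : ℂ → ℝ, ContDiff ℝ 1 ψ → HasCompactSupport ψ → tsupport ψ ⊆ ball 0 1 →
      (∫ x in ball (0:ℂ) 1,
        ((U x).re * fderiv ℝ ψ x 1 + (U x).im * fderiv ℝ ψ x Complex.I)) = 0) :
    (∀ ψ : ℂ → ℝ, ContDiff ℝ 2 ψ → HasCompactSupport ψ →
      (∫ x, antiReflect u x * lap ψ x) = 0)
    ∧ (∀ᵐ x ∂volume.restrict (ball (0:ℂ) 1), u x = 0) := by
  have htrace' i : HasWeakDerivAlong ((ball 0 1).indicator u)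
      ((ball 0 1).indicator fun x => inner ℝ (orthonormalBasisOneI i) (U x))
      (orthonormalBasisOneI i) volume := by
    fin_cases i
    · simpa [HasWeakDerivAlong, Complex.inner] using fun φ hφ hsupp => (htrace φ hφ hsupp).1
    · simpa [HasWeakDerivAlong, Complex.inner] using fun φ hφ hsupp => (htrace φ hφ hsupp).2
  have hdiv : IsWeaklyDivFreeOn U (ball 0 1) volume := fun ψ hψ hc hsupp => by
    simpa only [realLinear_apply_eq_re_smul_add_im_smul _ (U _), smul_eq_mul] using
      hharm ψ hψ hc hsupp
  have hzero := ae_eq_zero_of_hasWeakDerivAlong_of_isWeaklyDivFreeOn orthonormalBasisOneI hu hU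
    htrace' hdiv
  refine ⟨fun ψ _ _ => integral_eq_zero_of_ae ?_, hzero⟩
  filter_upwards [antiReflect_ae_eq (v := 0) hzero] with x hx
  rw [hx]
  simp [antiReflect]
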